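/- There exists η₀ > 0 such that for every γ ∈ C_c^∞(ℝ) supported in [−η₀,η₀] the following hold. Define, for x ∈ (−1,1) and ξ ∈ ℝ, e_±(x,ξ) = ((x + p'(±ξ))/(ξ ∓ dφ(x))) γ(⟨ξ⟩²(x + p'(±ξ))) and ẽ_±(x,ξ) = ((ξ ∓ dφ(x))/(x + p'(±ξ))) γ(⟨ξ⟩²(x + p'(±ξ))). Then for all α, β ∈ ℕ there are constants C_{αβ} with |∂_x^α∂_ξ^β e_±(x,ξ)| ≤ C_{αβ} ⟨ξ⟩^{−3+2α−β} and |∂_x^α∂_ξ^β ẽ_±(x,ξ)| ≤ C_{αβ} ⟨ξ⟩^{3+2α−β}. Moreover, on the support of γ(⟨ξ⟩²(x+p'(±ξ))) one has c⟨ξ⟩ ≤ ⟨dφ(x)⟩ ≤ c^{−1}⟨ξ⟩ for some c > 0, and there is A > 0 such that on that support, for ξ ≥ 1, A^{−1}⟨ξ⟩^{−2} ≤ ±x + 1 ≤ A⟨ξ⟩^{−2}, while for ξ ≤ −1, A^{−1}⟨ξ⟩^{−2} ≤ ∓x + 1 ≤ A⟨ξ⟩^{−2}. Finally, for every k ∈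 ℕ there is C_k with |(d/dx)^k(dφ(x))| ≤ C_k ⟨dφ(x)⟩^{1+2k} for all x ∈ (−1,1). -/

import Mathlib

noncomputable section

/-- `p'(ξ) = ξ/√(1+ξ²)`. -/
def pprime (ξ : ℝ) : ℝ := ξ / Real.sqrt (1 + ξ^2)
/-- The Japanese bracket `⟨z⟩ = √(1+z²)`. -/
def jap (z : ℝ) : ℝ := Real.sqrt (1 + z^2)
/-- `dφ(x) = −x/√(1−x²)`, the derivative of `φ(x) = √(1−x²)` on `(−1,1)`. -/
def dphi (x : ℝ) : ℝ := -x / Real.sqrt (1 - x^2)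

/-- Partial derivative in `x` of a real symbol. -/
def pd1R (f : ℝ → ℝ → ℝ) : ℝ → ℝ → ℝ := fun x ξ => deriv (fun x' => f x' ξ) x
/-- Partial derivative in `ξ` of a real symbol. -/
def pd2R (f : ℝ → ℝ → ℝ) : ℝ → ℝ → ℝ := fun x ξ => deriv (fun ξ' => f x ξ') ξ

/-- The symbol `e_±(x,ξ)` (with `sg = ±1`). -/
def esym (γ : ℝ → ℝ) (sg : ℝ) (x ξ : ℝ) : ℝ :=
  (x + pprime (sg * ξ)) / (ξ - sg * dphi x) * γ (jap ξ ^ 2 * (x + pprime (sg * ξ)))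
/-- The symbol `ẽ_±(x,ξ)` (with `sg = ±1`). -/
def etsym (γ : ℝ → ℝ) (sg : ℝ) (x ξ : ℝ) : ℝ :=
  (ξ - sg * dphi x) / (x + pprime (sg * ξ)) * γ (jap ξ ^ 2 * (x + pprime (sg * ξ)))

open Filter Topology in
lemma deriv_alt {f F : ℝ → ℝ} {F' a : ℝ} (hF : HasDerivAt F F' a)
    (h : f =ᶠ[𝓝[≠] a] F) : deriv f a = F' ∨ deriv f a = 0 := by
  by_cases hd : DifferentiableAt ℝ f a
  · left
    have h1 : Tendsto f (𝓝[≠] a) (𝓝 (f a)) := hd.continuousAt.tendsto.mono_left nhdsWithin_le_nhds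
    have h2 : Tendsto f (𝓝[≠] a) (𝓝 (F a)) :=
      (hF.continuousAt.tendsto.mono_left nhdsWithin_le_nhds).congr' h.symm
    have h3 : f a = F a := tendsto_nhds_unique h1 h2
    have h4 : f =ᶠ[𝓝 a] F := by
      rw [Filter.EventuallyEq, eventually_nhdsWithin_iff] at h
      filter_upwards [h] with y hy
      by_cases hya : y = a
      · rw [hya, h3]
      · exact hy hya
    rw [h4.deriv_eq, hF.deriv]
  · right
    exact deriv_zero_of_not_differentiableAt hd

lemma jap_pos (ξ : ℝ) : 0 < jap ξ := Real.sqrt_pos.2 (by positivity)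

lemma jap_sq (ξ : ℝ) : jap ξ ^ 2 = 1 + ξ ^ 2 := Real.sq_sqrt (by positivity)

lemma pprime_sg {sg : ℝ} (hs : sg = 1 ∨ sg = -1) (ξ : ℝ) :
    pprime (sg * ξ) = sg * ξ / jap ξ := by
  unfold pprime jap
  rcases hs with rfl | rfl <;> simp

lemma sg_sq {sg : ℝ} (hs : sg = 1 ∨ sg = -1) : sg ^ 2 = 1 := by
  rcases hs with rfl | rfl <;> norm_num

lemma q_eq {sg : ℝ} (hs : sg = 1 ∨ sg = -1) (ξ : ℝ) :
    jap ξ ^ 2 * (1 - pprime (sg * ξ) ^ 2) = 1 := by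
  rw [pprime_sg hs]
  have := jap_pos ξ
  field_simp
  rw [sg_sq hs, jap_sq]
  ring

lemma pprime_abs {sg : ℝ} (hs : sg = 1 ∨ sg = -1) (ξ : ℝ) :
    pprime (sg * ξ) ^ 2 < 1 := by
  have := q_eq hs ξ
  have h2 := pow_pos (jap_pos ξ) 2
  by_contra hc
  push Not at hc
  nlinarith

lemma hasDerivAt_jap (ξ : ℝ) : HasDerivAt jap (ξ / jap ξ) ξ := by
  have h : HasDerivAt (fun z : ℝ => 1 + z ^ 2) (2 * ξ) ξ := by
    simpa using (hasDerivAt_pow 2 ξ).const_add 1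
  have := h.sqrt (by positivity)
  refine HasDerivAt.congr_deriv (f := jap) this ?_
  unfold jap
  field_simp

lemma hasDerivAt_P {sg : ℝ} (hs : sg = 1 ∨ sg = -1) (ξ : ℝ) :
    HasDerivAt (fun ξ => pprime (sg * ξ)) (sg * (1 - pprime (sg * ξ) ^ 2) / jap ξ) ξ := by
  have hp := jap_pos ξ
  have h1 : (fun ξ => pprime (sg * ξ)) = fun ξ => sg * ξ / jap ξ := funext (pprime_sg hs)
  have h2 := ((hasDerivAt_id ξ).const_mul sg).div (hasDerivAt_jap ξ) hp.ne'
  rw [h1]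
  refine HasDerivAt.congr_deriv h2 ?_
  rw [pprime_sg hs]
  simp only [id]
  field_simp
  rw [sg_sq hs]
  ring

def Wf (sg x ξ : ℝ) : ℝ := jap ξ ^ 2 * (x + pprime (sg * ξ))

lemma hasDerivAt_W2 {sg : ℝ} (hs : sg = 1 ∨ sg = -1) (x ξ : ℝ) :
    HasDerivAt (fun ξ => Wf sg x ξ)
      (sg * (2 * pprime (sg * ξ) * Wf sg x ξ + 1) / jap ξ) ξ := by
  have hp := jap_pos ξ
  have h := ((hasDerivAt_jap ξ).pow 2).mul ((hasDerivAt_P hs ξ).const_add x)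
  unfold Wf
  refine HasDerivAt.congr_deriv h ?_
  have hq := q_eq hs ξ
  have hx : ξ = sg * pprime (sg * ξ) * jap ξ := by
    rw [pprime_sg hs]; field_simp; rw [sg_sq hs]; ring
  generalize pprime (sg * ξ) = P at *
  have hd : ξ / jap ξ = sg * P := by
    rw [div_eq_iff hp.ne']; exact hx
  rw [hd]
  field_simp
  push_cast
  have e : (jap ^ 2) ξ = jap ξ ^ 2 := rfl
  rw [e]
  first
  | linear_combination (-sg) * hq
  | linear_combination sg * hq

lemma hasDerivAt_W1 (sg x ξ : ℝ) :
    HasDerivAt (fun x => Wf sg x ξ) (jap ξ ^ 2) x := by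
  unfold Wf
  simpa using ((hasDerivAt_id x).add_const (pprime (sg * ξ))).const_mul (jap ξ ^ 2)

def Good (η : ℝ) (K : ℝ × ℝ → ℝ) : Prop :=
  (∀ z : ℝ × ℝ, |z.1| < 2 → ContDiffAt ℝ (⊤ : ℕ∞) K z) ∧ ∀ z : ℝ × ℝ, η < |z.2| → K z = 0

lemma Good.fd {η : ℝ} {K : ℝ × ℝ → ℝ} (h : Good η K) (v : ℝ × ℝ) :
    Good η (fun z => fderiv ℝ K z v) := by
  refine ⟨fun z hz => ?_, fun z hz => ?_⟩
  · have := (h.1 z hz).fderiv_right (m := (⊤ : ℕ∞)) (by exact_mod_cast le_rfl)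
    exact this.clm_apply contDiffAt_const
  · show fderiv ℝ K z v = 0
    have ho : IsOpen {z : ℝ × ℝ | η < |z.2|} := isOpen_lt continuous_const (by fun_prop)
    have he : K =ᶠ[nhds z] fun _ => 0 := by
      filter_upwards [ho.mem_nhds hz] with y hy using h.2 y hy
    rw [he.fderiv_eq]
    simp

lemma Good.bdd {η : ℝ} {K : ℝ × ℝ → ℝ} (h : Good η K) :
    ∃ C : ℝ, 0 < C ∧ ∀ p w : ℝ, p ^ 2 < 1 → |K (p, w)| ≤ C := by
  have hc : IsCompact (Set.Icc (-1:ℝ) 1 ×ˢ Set.Icc (-η) η) := isCompact_Icc.prod isCompact_Icc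
  have hco : ContinuousOn K (Set.Icc (-1:ℝ) 1 ×ˢ Set.Icc (-η) η) := by
    intro z hz
    refine (h.1 z ?_).continuousAt.continuousWithinAt
    have := abs_le.2 ⟨hz.1.1, hz.1.2⟩
    linarith
  obtain ⟨C, hC⟩ := hc.exists_bound_of_continuousOn hco
  refine ⟨max C 1, by positivity, fun p w hp => ?_⟩
  by_cases hw : η < |w|
  · rw [h.2 (p, w) hw]; simp
  · push Not at hw
    have h1 := abs_le.1 hw
    have h2 := abs_le.1 (sq_le_one_iff_abs_le_one p |>.1 hp.le)
    exact (hC (p, w) ⟨⟨h2.1, h2.2⟩, ⟨h1.1, h1.2⟩⟩).trans (le_max_left _ _)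

def Fsym (sg m : ℝ) (K : ℝ × ℝ → ℝ) (x ξ : ℝ) : ℝ :=
  jap ξ ^ m * K (pprime (sg * ξ), Wf sg x ξ)

lemma abs_lt_two {p : ℝ} (h : p ^ 2 < 1) : |p| < 2 := by
  have := sq_lt_one_iff_abs_lt_one p |>.1 h
  linarith

lemma Fsym_d1 {η sg : ℝ} (hs : sg = 1 ∨ sg = -1) (m : ℝ) {K : ℝ × ℝ → ℝ} (h : Good η K)
    (x ξ : ℝ) : HasDerivAt (fun x => Fsym sg m K x ξ)
      (Fsym sg (m + 2) (fun z => fderiv ℝ K z (0, 1)) x ξ) x := by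
  have hK : HasFDerivAt K (fderiv ℝ K (pprime (sg * ξ), Wf sg x ξ)) (pprime (sg * ξ), Wf sg x ξ) :=
    ((h.1 _ (abs_lt_two (pprime_abs hs ξ))).differentiableAt (by simp)).hasFDerivAt
  have h1 := (hasDerivAt_const x (pprime (sg * ξ))).prodMk (hasDerivAt_W1 sg x ξ)
  have h2 := (hK.comp_hasDerivAt x h1).const_mul (jap ξ ^ m)
  unfold Fsym
  refine HasDerivAt.congr_deriv h2 ?_
  have : ((0:ℝ), jap ξ ^ 2) = (jap ξ ^ 2) • ((0:ℝ), (1:ℝ)) := by simp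
  rw [this, map_smul, Real.rpow_add (jap_pos ξ), smul_eq_mul]
  norm_cast
  ring

def Kd (sg m : ℝ) (K : ℝ × ℝ → ℝ) (z : ℝ × ℝ) : ℝ :=
  sg * (m * z.1 * K z + (1 - z.1 ^ 2) * fderiv ℝ K z (1, 0)
    + (2 * z.1 * z.2 + 1) * fderiv ℝ K z (0, 1))

lemma Good.kd {η : ℝ} {K : ℝ × ℝ → ℝ} (h : Good η K) (sg m : ℝ) : Good η (Kd sg m K) := by
  have ha := h.fd (1, 0)
  have hb := h.fd (0, 1)
  refine ⟨fun z hz => ?_, fun z hz => ?_⟩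
  · have h0 := h.1 z hz
    have h1 := ha.1 z hz
    have h2 := hb.1 z hz
    unfold Kd
    have e1 : ContDiffAt ℝ (⊤ : ℕ∞) (fun z : ℝ × ℝ => z.1) z := contDiffAt_fst
    have e2 : ContDiffAt ℝ (⊤ : ℕ∞) (fun z : ℝ × ℝ => z.2) z := contDiffAt_snd
    exact contDiffAt_const.mul ((((contDiffAt_const.mul e1).mul h0).add
      ((contDiffAt_const.sub (e1.pow 2)).mul h1)).add
      ((((contDiffAt_const.mul e1).mul e2).add contDiffAt_const).mul h2))
  · have h1 := ha.2 z hz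
    have h2 := hb.2 z hz
    simp only at h1 h2
    simp only [Kd, h.2 z hz, h1, h2]
    ring

lemma Fsym_d2 {η sg : ℝ} (hs : sg = 1 ∨ sg = -1) (m : ℝ) {K : ℝ × ℝ → ℝ} (h : Good η K)
    (x ξ : ℝ) : HasDerivAt (fun ξ => Fsym sg m K x ξ)
      (Fsym sg (m - 1) (Kd sg m K) x ξ) ξ := by
  have hp := jap_pos ξ
  have hK : HasFDerivAt K (fderiv ℝ K (pprime (sg * ξ), Wf sg x ξ)) (pprime (sg * ξ), Wf sg x ξ) :=
    ((h.1 _ (abs_lt_two (pprime_abs hs ξ))).differentiableAt (by simp)).hasFDerivAt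
  have h1 := (hasDerivAt_P hs ξ).prodMk (hasDerivAt_W2 hs x ξ)
  have h2 := ((hasDerivAt_jap ξ).rpow_const (p := m) (Or.inl hp.ne')).mul
    (hK.comp_hasDerivAt ξ h1)
  unfold Fsym
  refine HasDerivAt.congr_deriv h2 ?_
  have hv : ∀ a b : ℝ, (a, b) = a • ((1:ℝ), (0:ℝ)) + b • ((0:ℝ), (1:ℝ)) := by intro a b; simp
  rw [hv (sg * (1 - pprime (sg * ξ) ^ 2) / jap ξ), map_add, map_smul, map_smul]
  simp only [Kd, smul_eq_mul, Function.comp]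
  have hx : ξ / jap ξ = sg * pprime (sg * ξ) := by
    rw [pprime_sg hs]; field_simp; rw [sg_sq hs]; ring
  have hm : jap ξ ^ m = jap ξ ^ (m - 1) * jap ξ := by
    rw [Real.rpow_sub_one hp.ne']; field_simp
  rw [hx, hm]
  field_simp
  ring

lemma dphi_jap {x : ℝ} (hx : x ∈ Set.Ioo (-1:ℝ) 1) :
    0 < Real.sqrt (1 - x ^ 2) ∧ Real.sqrt (1 - x ^ 2) ^ 2 = 1 - x ^ 2 ∧
    jap (dphi x) = (Real.sqrt (1 - x ^ 2))⁻¹ := by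
  have h0 : 0 < 1 - x ^ 2 := by nlinarith [hx.1, hx.2]
  have h1 := Real.sqrt_pos.2 h0
  have h2 := Real.sq_sqrt h0.le
  refine ⟨h1, h2, ?_⟩
  rw [jap, Real.sqrt_eq_iff_mul_self_eq_of_pos (by positivity), dphi]
  field_simp
  rw [h2]; ring

lemma curve_iff {sg : ℝ} (hs : sg = 1 ∨ sg = -1) {x : ℝ} (hx : x ∈ Set.Ioo (-1:ℝ) 1) (ξ : ℝ) :
    x + pprime (sg * ξ) = 0 ↔ ξ = sg * dphi x := by
  obtain ⟨h1, h2, h3⟩ := dphi_jap hx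
  constructor
  · intro h
    have hq := q_eq hs ξ
    have hp := jap_pos ξ
    have hP : pprime (sg * ξ) = -x := by linarith
    have hj : jap ξ = (Real.sqrt (1 - x ^ 2))⁻¹ := by
      rw [hP] at hq
      apply eq_inv_of_mul_eq_one_left
      have : (jap ξ * Real.sqrt (1 - x ^ 2)) ^ 2 = 1 := by
        rw [mul_pow, h2]; linarith
      exact (pow_eq_one_iff_of_nonneg (by positivity) (by norm_num)).1 this
    have : pprime (sg * ξ) = sg * ξ / jap ξ := pprime_sg hs ξ
    rw [hP, hj, div_inv_eq_mul] at this
    rw [dphi, this]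
    field_simp
    rw [sg_sq hs]; ring
  · intro h
    have : sg * ξ = dphi x := by
      rw [h, ← mul_assoc, ← sq, sg_sq hs, one_mul]
    rw [this]
    have e : pprime (dphi x) = dphi x / jap (dphi x) := rfl
    rw [e, h3, dphi]
    field_simp
    ring

def SymC (η sg m : ℝ) (f : ℝ → ℝ → ℝ) : Prop :=
  ∃ K, Good η K ∧ ∀ x ∈ Set.Ioo (-1:ℝ) 1, ∀ ξ : ℝ,
    (x + pprime (sg * ξ) ≠ 0 → f x ξ = Fsym sg m K x ξ) ∧
    (f x ξ = Fsym sg m K x ξ ∨ f x ξ = 0)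

lemma ev_ne (a c : ℝ) : ∀ᶠ y in nhdsWithin a {a}ᶜ, y ≠ c := by
  have h : ∀ᶠ y in Filter.cofinite, y ≠ c := Filter.eventually_cofinite_ne c
  exact h.filter_mono (nhdsNE_le_cofinite a)

lemma SymC.d1 {η sg m : ℝ} (hs : sg = 1 ∨ sg = -1) {f : ℝ → ℝ → ℝ} (h : SymC η sg m f) :
    SymC η sg (m + 2) (pd1R f) := by
  obtain ⟨K, hK, hf⟩ := h
  refine ⟨_, hK.fd (0, 1), fun x hx ξ => ⟨fun hne => ?_, ?_⟩⟩
  · have he : (fun x' => f x' ξ) =ᶠ[nhds x] fun x' => Fsym sg m K x' ξ := by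
      have h1 : ∀ᶠ x' in nhds x, x' + pprime (sg * ξ) ≠ 0 :=
        ContinuousAt.eventually_ne (by fun_prop) hne
      filter_upwards [h1, isOpen_Ioo.mem_nhds hx] with y hy hy2 using (hf y hy2 ξ).1 hy
    rw [pd1R, he.deriv_eq]
    exact (Fsym_d1 hs m hK x ξ).deriv
  · refine deriv_alt (Fsym_d1 hs m hK x ξ) ?_
    filter_upwards [ev_ne x (-pprime (sg * ξ)),
      nhdsWithin_le_nhds (isOpen_Ioo.mem_nhds hx)] with y hy hy2
    exact (hf y hy2 ξ).1 (fun h => hy (by linarith))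

lemma SymC.d2 {η sg m : ℝ} (hs : sg = 1 ∨ sg = -1) {f : ℝ → ℝ → ℝ} (h : SymC η sg m f) :
    SymC η sg (m - 1) (pd2R f) := by
  obtain ⟨K, hK, hf⟩ := h
  refine ⟨_, hK.kd sg m, fun x hx ξ => ⟨fun hne => ?_, ?_⟩⟩
  · have he : (fun ξ' => f x ξ') =ᶠ[nhds ξ] fun ξ' => Fsym sg m K x ξ' := by
      have hne' : ξ ≠ sg * dphi x := fun h => hne ((curve_iff hs hx ξ).2 h)
      have h1 : ∀ᶠ y in nhds ξ, y ≠ sg * dphi x := eventually_ne_nhds hne'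
      filter_upwards [h1] with y hy
      exact (hf x hx y).1 (fun h => hy ((curve_iff hs hx y).1 h))
    rw [pd2R, he.deriv_eq]
    exact (Fsym_d2 hs m hK x ξ).deriv
  · refine deriv_alt (Fsym_d2 hs m hK x ξ) ?_
    filter_upwards [ev_ne ξ (sg * dphi x)] with y hy
    exact (hf x hx y).1 (fun h => hy ((curve_iff hs hx y).1 h))

lemma SymC.iter {η sg m : ℝ} (hs : sg = 1 ∨ sg = -1) {f : ℝ → ℝ → ℝ} (h : SymC η sg m f)
    (α β : ℕ) : SymC η sg (m + 2 * (α:ℝ) - (β:ℝ)) (pd1R^[α] (pd2R^[β] f)) := by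
  have h2 : SymC η sg (m - (β:ℝ)) (pd2R^[β] f) := by
    induction β with
    | zero => simpa using h
    | succ b ih =>
      rw [Function.iterate_succ_apply']
      have := ih.d2 hs
      convert this using 1
      push_cast; ring
  induction α with
  | zero => simpa using h2
  | succ a ih =>
    rw [Function.iterate_succ_apply']
    have := ih.d1 hs
    convert this using 1
    push_cast; ring

lemma SymC.bound {η sg m : ℝ} (hs : sg = 1 ∨ sg = -1) {f : ℝ → ℝ → ℝ} (h : SymC η sg m f) :
    ∃ C : ℝ, 0 < C ∧ ∀ x ∈ Set.Ioo (-1:ℝ) 1, ∀ ξ : ℝ, |f x ξ| ≤ C * jap ξ ^ m := by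
  obtain ⟨K, hK, hf⟩ := h
  obtain ⟨C, hC, hb⟩ := hK.bdd
  refine ⟨C, hC, fun x hx ξ => ?_⟩
  have hj := Real.rpow_pos_of_pos (jap_pos ξ) m
  rcases (hf x hx ξ).2 with h | h
  · rw [h, Fsym, abs_mul, abs_of_pos hj, mul_comm]
    exact mul_le_mul_of_nonneg_right (hb _ _ (pprime_abs hs ξ)) hj.le
  · rw [h, abs_zero]; positivity

def Df (z : ℝ × ℝ) : ℝ := 1 + 2 * z.1 * z.2 - z.2 ^ 2 * (1 - z.1 ^ 2)
def Nf (z : ℝ × ℝ) : ℝ :=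
  1 + z.1 ^ 2 + (1 - z.1 ^ 2) * Real.sqrt (Df z) - z.1 * z.2 * (1 - z.1 ^ 2)
def Mf (z : ℝ × ℝ) : ℝ := Real.sqrt (Df z) * (1 + Real.sqrt (Df z))

lemma Df_bd {z : ℝ × ℝ} (h1 : |z.1| < 2) (h2 : |z.2| ≤ 1 / 100) :
    9 / 10 < Df z ∧ Df z < 11 / 10 := by
  obtain ⟨p, w⟩ := z
  simp only at h1 h2
  have hpw : |p * w| ≤ 2 * (1 / 100) := by
    rw [abs_mul]; exact mul_le_mul h1.le h2 (abs_nonneg _) (by norm_num)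
  have hw2 : w ^ 2 ≤ (1 / 100) ^ 2 := sq_le_sq' (abs_le.1 h2).1 (abs_le.1 h2).2
  have hpw2 : (p * w) ^ 2 ≤ (2 * (1 / 100)) ^ 2 := sq_le_sq' (abs_le.1 hpw).1 (abs_le.1 hpw).2
  have := abs_le.1 hpw
  have e : Df (p, w) = 1 + 2 * (p * w) - w ^ 2 + (p * w) ^ 2 := by simp only [Df]; ring
  rw [e]
  constructor <;> nlinarith [sq_nonneg w, sq_nonneg (p * w)]

lemma NM_pos {z : ℝ × ℝ} (h1 : |z.1| < 2) (h2 : |z.2| ≤ 1 / 100) :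
    0 < Df z ∧ 0 < Nf z ∧ 0 < Mf z := by
  obtain ⟨d1, d2⟩ := Df_bd h1 h2
  have hD : 0 < Df z := by linarith
  have hR := Real.sqrt_pos.2 hD
  refine ⟨hD, ?_, by unfold Mf; positivity⟩
  have hRR := Real.sq_sqrt hD.le
  unfold Nf
  set R := Real.sqrt (Df z)
  have r1 : 9 / 10 < R := by nlinarith
  have r2 : R < 11 / 10 := by nlinarith
  obtain ⟨p, w⟩ := z
  simp only at h1 h2 ⊢
  have hp2 : p ^ 2 < 4 := by
    have := sq_lt_sq' (abs_lt.1 h1).1 (abs_lt.1 h1).2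
    linarith
  have hpw : |p * w| ≤ 2 * (1 / 100) := by
    rw [abs_mul]; exact mul_le_mul h1.le h2 (abs_nonneg _) (by norm_num)
  have := abs_le.1 hpw
  have a1 : p ^ 2 * (R - 1) ≤ 4 * (1 / 10) := by nlinarith [sq_nonneg p]
  have a2 : p * w * (1 - p ^ 2) ≤ 2 * (1 / 100) * 5 := by
    have : |p * w * (1 - p ^ 2)| ≤ 2 * (1 / 100) * 5 := by
      rw [abs_mul]
      exact mul_le_mul hpw (abs_le.2 ⟨by nlinarith, by nlinarith⟩) (abs_nonneg _) (by norm_num)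
    exact (abs_le.1 this).2
  nlinarith

lemma NM_smooth {z : ℝ × ℝ} (h1 : |z.1| < 2) (h2 : |z.2| ≤ 1 / 100) :
    ContDiffAt ℝ (⊤ : ℕ∞) Nf z ∧ ContDiffAt ℝ (⊤ : ℕ∞) Mf z := by
  obtain ⟨hD, hN, hM⟩ := NM_pos h1 h2
  have e1 : ContDiffAt ℝ (⊤ : ℕ∞) (fun z : ℝ × ℝ => z.1) z := contDiffAt_fst
  have e2 : ContDiffAt ℝ (⊤ : ℕ∞) (fun z : ℝ × ℝ => z.2) z := contDiffAt_snd
  have eD : ContDiffAt ℝ (⊤ : ℕ∞) Df z :=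
    (contDiffAt_const.add ((contDiffAt_const.mul e1).mul e2)).sub
      ((e2.pow 2).mul (contDiffAt_const.sub (e1.pow 2)))
  have eR := eD.sqrt hD.ne'
  exact ⟨((contDiffAt_const.add (e1.pow 2)).add ((contDiffAt_const.sub (e1.pow 2)).mul eR)).sub
      ((e1.mul e2).mul (contDiffAt_const.sub (e1.pow 2))),
    eR.mul (contDiffAt_const.add eR)⟩

lemma good_of {γ : ℝ → ℝ} (hγ : ContDiff ℝ (⊤ : ℕ∞) γ)
    (hsupp : tsupport γ ⊆ Set.Icc (-(1/100)) (1/100)) {G : ℝ × ℝ → ℝ}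
    (hG : ∀ z : ℝ × ℝ, |z.1| < 2 → |z.2| ≤ 1 / 100 → ContDiffAt ℝ (⊤ : ℕ∞) G z) :
    Good (1/100) (fun z => γ z.2 * G z) := by
  have hz0 : ∀ z : ℝ × ℝ, z.2 ∉ tsupport γ → γ z.2 = 0 := fun z hz => image_eq_zero_of_notMem_tsupport hz
  refine ⟨fun z hz => ?_, fun z hz => ?_⟩
  · by_cases hw : z.2 ∈ tsupport γ
    · have := hsupp hw
      exact (hγ.contDiffAt.comp z contDiffAt_snd).mul (hG z hz (abs_le.2 ⟨this.1, this.2⟩))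
    · have ho : IsOpen {z : ℝ × ℝ | z.2 ∈ (tsupport γ)ᶜ} :=
        (isClosed_tsupport γ).isOpen_compl.preimage continuous_snd
      have : (fun z : ℝ × ℝ => γ z.2 * G z) =ᶠ[nhds z] fun _ => 0 := by
        filter_upwards [ho.mem_nhds hw] with y hy
        rw [hz0 y hy, zero_mul]
      exact contDiffAt_const.congr_of_eventuallyEq this
  · have : z.2 ∉ tsupport γ := fun h => by
      have := hsupp h
      have := abs_le.2 ⟨this.1, this.2⟩
      linarith
    simp only [hz0 z this, zero_mul]

lemma W_small {γ : ℝ → ℝ} (hsupp : tsupport γ ⊆ Set.Icc (-(1/100)) (1/100)) {w : ℝ}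
    (h : γ w ≠ 0) : |w| ≤ 1 / 100 := by
  have := hsupp (subset_tsupport γ h)
  exact abs_le.2 ⟨this.1, this.2⟩

lemma Df_eq {sg : ℝ} (hs : sg = 1 ∨ sg = -1) {x : ℝ} (hx : x ∈ Set.Ioo (-1:ℝ) 1) (ξ : ℝ) :
    Real.sqrt (Df (pprime (sg * ξ), Wf sg x ξ)) = jap ξ * Real.sqrt (1 - x ^ 2) := by
  obtain ⟨h1, h2, h3⟩ := dphi_jap hx
  have hp := jap_pos ξ
  rw [Real.sqrt_eq_iff_mul_self_eq_of_pos (by positivity)]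
  have hq := q_eq hs ξ
  simp only [Df, Wf]
  generalize pprime (sg * ξ) = P at *
  generalize jap ξ = t at *
  have : t * √(1 - x ^ 2) * (t * √(1 - x ^ 2)) = t ^ 2 * (1 - x ^ 2) := by linear_combination t ^ 2 * h2
  rw [this]
  linear_combination (1 + t ^ 2 * (x + P) ^ 2) * hq

lemma ratio_eq {sg : ℝ} (hs : sg = 1 ∨ sg = -1) {x : ℝ} (hx : x ∈ Set.Ioo (-1:ℝ) 1) (ξ : ℝ) :
    (ξ - sg * dphi x) * Mf (pprime (sg * ξ), Wf sg x ξ) =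
      (x + pprime (sg * ξ)) * (sg * jap ξ ^ 3 * Nf (pprime (sg * ξ), Wf sg x ξ)) := by
  have hR := Df_eq hs hx ξ
  obtain ⟨h1, h2, h3⟩ := dphi_jap hx
  have hp := jap_pos ξ
  have hq := q_eq hs ξ
  have hsg := sg_sq hs
  have hξ : ξ = sg * pprime (sg * ξ) * jap ξ := by
    rw [pprime_sg hs]; field_simp; rw [hsg]; ring
  simp only [Mf, Nf, hR]
  simp only [Wf, dphi]
  generalize pprime (sg * ξ) = P at *
  generalize jap ξ = t at *
  subst hξ
  generalize √(1 - x ^ 2) = s at *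
  have hP : P ^ 2 = 1 - 1 / t ^ 2 := by field_simp; linarith
  have hN : t ^ 3 * (1 + P ^ 2 + (1 - P ^ 2) * (t * s) - P * (t ^ 2 * (x + P)) * (1 - P ^ 2))
      = t ^ 3 * (1 - P * x) + t ^ 2 * s := by
    linear_combination (t ^ 2 * s - t ^ 3 * P * (x + P)) * hq
  have hL : (sg * P * t - sg * (-x / s)) * (t * s * (1 + t * s))
      = sg * ((P * t * s + x) * (t * (1 + t * s))) := by
    field_simp
    ring
  rw [hL]
  have : (x + P) * (sg * t ^ 3 * (1 + P ^ 2 + (1 - P ^ 2) * (t * s) - P * (t ^ 2 * (x + P)) * (1 - P ^ 2)))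
    = sg * ((x + P) * (t ^ 3 * (1 - P * x) + t ^ 2 * s)) := by rw [← hN]; ring
  rw [this]
  congr 1
  linear_combination P * t ^ 3 * h2 - x * t * hq

lemma base_et {γ : ℝ → ℝ} (hγ : ContDiff ℝ (⊤ : ℕ∞) γ)
    (hsupp : tsupport γ ⊆ Set.Icc (-(1/100)) (1/100)) {sg : ℝ} (hs : sg = 1 ∨ sg = -1) :
    SymC (1/100) sg 3 (etsym γ sg) := by
  refine ⟨_, good_of hγ hsupp (G := fun z => sg * (Nf z / Mf z)) (fun z h1 h2 =>
    contDiffAt_const.mul ((NM_smooth h1 h2).1.div (NM_smooth h1 h2).2 (NM_pos h1 h2).2.2.ne')), ?_⟩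
  intro x hx ξ
  have key : x + pprime (sg * ξ) ≠ 0 → etsym γ sg x ξ =
      Fsym sg 3 (fun z => γ z.2 * (sg * (Nf z / Mf z))) x ξ := by
    intro hne
    have hW : jap ξ ^ 2 * (x + pprime (sg * ξ)) = Wf sg x ξ := rfl
    simp only [etsym, Fsym, hW]
    by_cases h0 : γ (Wf sg x ξ) = 0
    · simp [h0]
    · obtain ⟨hD, hN, hM⟩ := NM_pos (z := (pprime (sg * ξ), Wf sg x ξ))
        (abs_lt_two (pprime_abs hs ξ)) (W_small hsupp h0)
      have := ratio_eq hs hx ξ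
      have hr : (ξ - sg * dphi x) / (x + pprime (sg * ξ)) = sg * jap ξ ^ 3 *
          Nf (pprime (sg * ξ), Wf sg x ξ) / Mf (pprime (sg * ξ), Wf sg x ξ) := by
        rw [div_eq_div_iff hne hM.ne', this]; ring
      rw [hr]
      norm_cast
      ring
  refine ⟨key, ?_⟩
  by_cases hne : x + pprime (sg * ξ) = 0
  · right; simp [etsym, hne]
  · left; exact key hne

lemma base_e {γ : ℝ → ℝ} (hγ : ContDiff ℝ (⊤ : ℕ∞) γ)
    (hsupp : tsupport γ ⊆ Set.Icc (-(1/100)) (1/100)) {sg : ℝ} (hs : sg = 1 ∨ sg = -1) :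
    SymC (1/100) sg (-3) (esym γ sg) := by
  refine ⟨_, good_of hγ hsupp (G := fun z => sg * (Mf z / Nf z)) (fun z h1 h2 =>
    contDiffAt_const.mul ((NM_smooth h1 h2).2.div (NM_smooth h1 h2).1 (NM_pos h1 h2).2.1.ne')), ?_⟩
  intro x hx ξ
  have key : x + pprime (sg * ξ) ≠ 0 → esym γ sg x ξ =
      Fsym sg (-3) (fun z => γ z.2 * (sg * (Mf z / Nf z))) x ξ := by
    intro hne
    have hW : jap ξ ^ 2 * (x + pprime (sg * ξ)) = Wf sg x ξ := rfl
    simp only [esym, Fsym, hW]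
    by_cases h0 : γ (Wf sg x ξ) = 0
    · simp [h0]
    · obtain ⟨hD, hN, hM⟩ := NM_pos (z := (pprime (sg * ξ), Wf sg x ξ))
        (abs_lt_two (pprime_abs hs ξ)) (W_small hsupp h0)
      have := ratio_eq hs hx ξ
      have hne2 : ξ - sg * dphi x ≠ 0 := fun h => hne ((curve_iff hs hx ξ).2 (by linarith))
      have hp := jap_pos ξ
      have hsg := sg_sq hs
      have hr : (x + pprime (sg * ξ)) / (ξ - sg * dphi x) = sg * (jap ξ ^ 3)⁻¹ *
          Mf (pprime (sg * ξ), Wf sg x ξ) / Nf (pprime (sg * ξ), Wf sg x ξ) := by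
        rw [div_eq_div_iff hne2 hN.ne']
        field_simp
        linear_combination (-sg) * this - (x + pprime (sg * ξ)) * jap ξ ^ 3 *
          Nf (pprime (sg * ξ), Wf sg x ξ) * hsg
      have h3 : jap ξ ^ (-3:ℝ) = (jap ξ ^ 3)⁻¹ := by
        rw [Real.rpow_neg hp.le]; norm_cast
      rw [hr, h3]
      ring
  refine ⟨key, ?_⟩
  by_cases hne : x + pprime (sg * ξ) = 0
  · right; simp [esym, hne]
  · left; exact key hne

open Polynomial in
lemma dphi_iter (k : ℕ) : ∃ Q : ℝ[X], ∀ x ∈ Set.Ioo (-1:ℝ) 1,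
    deriv^[k] dphi x = Q.eval x * (1 - x ^ 2) ^ (-(1/2:ℝ) - k) := by
  induction k with
  | zero =>
    refine ⟨-X, fun x hx => ?_⟩
    have h0 : 0 < 1 - x ^ 2 := by nlinarith [hx.1, hx.2]
    simp only [Function.iterate_zero, id, dphi, Nat.cast_zero, sub_zero, Real.rpow_neg h0.le,
      ← Real.sqrt_eq_rpow]
    simp [div_eq_mul_inv]
  | succ k ih =>
    obtain ⟨Q, hQ⟩ := ih
    refine ⟨(1 - X ^ 2) * derivative Q + C (1 + 2 * (k:ℝ)) * X * Q, fun x hx => ?_⟩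
    have h0 : 0 < 1 - x ^ 2 := by nlinarith [hx.1, hx.2]
    rw [Function.iterate_succ_apply']
    have he : deriv^[k] dphi =ᶠ[nhds x] fun x => Q.eval x * (1 - x ^ 2) ^ (-(1/2:ℝ) - k) := by
      filter_upwards [isOpen_Ioo.mem_nhds hx] with y hy using hQ y hy
    rw [he.deriv_eq]
    have hi : HasDerivAt (fun x : ℝ => 1 - x ^ 2) (-(2 * x)) x := by
      simpa using (hasDerivAt_pow 2 x).const_sub 1
    have := (Q.hasDerivAt x).mul (hi.rpow_const (p := -(1/2:ℝ) - k) (Or.inl h0.ne'))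
    rw [HasDerivAt.deriv (f := fun x => Q.eval x * (1 - x ^ 2) ^ (-(1/2:ℝ) - k)) this]
    have e1 : (1 - x ^ 2) ^ (-(1/2:ℝ) - k) = (1 - x ^ 2) ^ (-(1/2:ℝ) - k - 1) * (1 - x ^ 2) := by
      rw [Real.rpow_sub_one h0.ne']; field_simp
    have e2 : (-(1/2:ℝ) - ((k + 1 : ℕ) : ℝ)) = -(1/2:ℝ) - k - 1 := by push_cast; ring
    rw [e2, e1]
    simp only [eval_add, eval_mul, eval_sub, eval_one, eval_pow, eval_X, eval_C]
    ring

lemma dphi_bd (k : ℕ) : ∃ C : ℝ, 0 < C ∧ ∀ x ∈ Set.Ioo (-1:ℝ) 1,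
    |deriv^[k] dphi x| ≤ C * jap (dphi x) ^ (1 + 2*(k:ℝ)) := by
  obtain ⟨Q, hQ⟩ := dphi_iter k
  obtain ⟨C, hC⟩ := (isCompact_Icc (a := (-1:ℝ)) (b := 1)).exists_bound_of_continuousOn
    (f := fun x => Q.eval x) Q.continuous.continuousOn
  refine ⟨max C 1, by positivity, fun x hx => ?_⟩
  have h0 : 0 < 1 - x ^ 2 := by nlinarith [hx.1, hx.2]
  obtain ⟨h1, h2, h3⟩ := dphi_jap hx
  have e : jap (dphi x) ^ (1 + 2*(k:ℝ)) = (1 - x ^ 2) ^ (-(1/2:ℝ) - k) := by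
    rw [h3, Real.sqrt_eq_rpow, ← Real.rpow_neg h0.le, ← Real.rpow_mul h0.le]
    congr 1; ring
  have hpos := Real.rpow_pos_of_pos h0 (-(1/2:ℝ) - k)
  rw [hQ x hx, e, abs_mul, abs_of_pos hpos]
  exact mul_le_mul_of_nonneg_right ((hC x ⟨hx.1.le, hx.2.le⟩).trans (le_max_left _ _)) hpos.le

lemma dphi_size {sg : ℝ} (hs : sg = 1 ∨ sg = -1) {x : ℝ} (hx : x ∈ Set.Ioo (-1:ℝ) 1) (ξ : ℝ)
    (hW : |Wf sg x ξ| ≤ 1 / 100) :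
    (1/2) * jap ξ ≤ jap (dphi x) ∧ jap (dphi x) ≤ (1/2:ℝ)⁻¹ * jap ξ := by
  obtain ⟨h1, h2, h3⟩ := dphi_jap hx
  have hR := Df_eq hs hx ξ
  obtain ⟨d1, d2⟩ := Df_bd (z := (pprime (sg * ξ), Wf sg x ξ)) (abs_lt_two (pprime_abs hs ξ)) hW
  have hsq := Real.sq_sqrt (show 0 ≤ Df (pprime (sg * ξ), Wf sg x ξ) by linarith)
  rw [hR] at hsq
  have hp := jap_pos ξ
  rw [h3]
  generalize jap ξ = t at *
  generalize √(1 - x ^ 2) = s at *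
  have hts : 0 < t * s := by positivity
  constructor
  · rw [le_inv_comm₀ (by positivity) h1, le_inv_comm₀ h1 (by positivity), ← one_div, le_div_iff₀ h1]
    nlinarith
  · rw [inv_le_iff_one_le_mul₀ h1]
    nlinarith

lemma x_size {sg : ℝ} (hs : sg = 1 ∨ sg = -1) {x : ℝ} (ξ : ℝ)
    (hW : |Wf sg x ξ| ≤ 1 / 100) (τ : ℝ) (hτ : τ = 1 ∨ τ = -1) (hξ : 1 ≤ τ * ξ) :
    (4:ℝ)⁻¹ * jap ξ ^ (-(2:ℝ)) ≤ τ * (sg * x) + 1 ∧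
      τ * (sg * x) + 1 ≤ 4 * jap ξ ^ (-(2:ℝ)) := by
  have hp := jap_pos ξ
  have hq := q_eq hs ξ
  have e : jap ξ ^ (-(2:ℝ)) = (jap ξ ^ 2)⁻¹ := by
    rw [Real.rpow_neg hp.le]; norm_cast
  have hlt := pprime_abs hs ξ
  have hτP : 0 ≤ τ * (sg * pprime (sg * ξ)) := by
    have : τ * (sg * pprime (sg * ξ)) = τ * ξ / jap ξ := by
      rw [pprime_sg hs]; field_simp; rw [sg_sq hs]; ring
    rw [this]; apply div_nonneg _ hp.le; linarith
  have hst : (τ * sg) ^ 2 = 1 := by rw [mul_pow, sg_sq hs, sg_sq hτ, one_mul]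
  rw [e]
  unfold Wf at hW
  generalize pprime (sg * ξ) = P at *
  have hT : 0 < jap ξ ^ 2 := by positivity
  generalize jap ξ ^ 2 = T at *
  set y := τ * sg * P with hy
  have hy0 : 0 ≤ y := by rw [hy]; linarith
  have hyy : y ^ 2 = P ^ 2 := by rw [hy, mul_pow, hst, one_mul]
  rw [← hyy] at hq hlt
  have hy1 : y < 1 := by nlinarith
  have hw : |T * (τ * (sg * x) + y)| ≤ 1 / 100 := by
    have : T * (τ * (sg * x) + y) = (τ * sg) * (T * (x + P)) := by rw [hy]; ring
    rw [this, abs_mul, show |τ * sg| = 1 from by rw [← sq_abs] at hst; exact (pow_eq_one_iff_of_nonneg (abs_nonneg _) (by norm_num)).1 hst, one_mul]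
    exact hW
  generalize τ * (sg * x) = v at *
  obtain ⟨w1, w2⟩ := abs_le.1 hw
  have a : 1 / 2 ≤ T * (1 - y) := by nlinarith
  have b : T * (1 - y) ≤ 1 := by nlinarith [mul_nonneg hT.le (mul_nonneg hy0 (sub_nonneg.2 hy1.le))]
  rw [← div_eq_mul_inv, ← div_eq_mul_inv, div_le_iff₀ hT, le_div_iff₀ hT]
  constructor <;> nlinarith

/-- **Properties of the symbols `e_±`, `ẽ_±`** microlocalized near the Lagrangian
`Λ` (Delort, Lemma 1.2.6): derivative bounds, size of `⟨dφ⟩` and of `±x+1` on the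
support of the cut-off, and growth of the derivatives of `dφ`. -/
theorem e_symbols_properties :
    ∃ η₀ : ℝ, 0 < η₀ ∧
      ∀ γ : ℝ → ℝ, ContDiff ℝ (⊤ : ℕ∞) γ → HasCompactSupport γ →
        tsupport γ ⊆ Set.Icc (-η₀) η₀ →
        ∀ sg : ℝ, sg = 1 ∨ sg = -1 →
          -- derivative bounds for e_± and ẽ_± :
          (∀ α β : ℕ, ∃ C : ℝ, 0 < C ∧ ∀ x ∈ Set.Ioo (-1:ℝ) 1, ∀ ξ : ℝ,
            |(pd1R^[α] (pd2R^[β] (esym γ sg))) x ξ| ≤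
              C * jap ξ ^ (-3 + 2*(α:ℝ) - (β:ℝ)) ∧
            |(pd1R^[α] (pd2R^[β] (etsym γ sg))) x ξ| ≤
              C * jap ξ ^ (3 + 2*(α:ℝ) - (β:ℝ))) ∧
          -- ⟨dφ(x)⟩ ~ ⟨ξ⟩ on the support of the cut-off:
          (∃ c : ℝ, 0 < c ∧ ∀ x ∈ Set.Ioo (-1:ℝ) 1, ∀ ξ : ℝ,
            γ (jap ξ ^ 2 * (x + pprime (sg * ξ))) ≠ 0 →
              c * jap ξ ≤ jap (dphi x) ∧ jap (dphi x) ≤ c⁻¹ * jap ξ) ∧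
          -- size of ±x+1 on the support of the cut-off:
          (∃ A : ℝ, 0 < A ∧ ∀ x ∈ Set.Ioo (-1:ℝ) 1, ∀ ξ : ℝ,
            γ (jap ξ ^ 2 * (x + pprime (sg * ξ))) ≠ 0 →
              (1 ≤ ξ → A⁻¹ * jap ξ ^ (-(2:ℝ)) ≤ sg * x + 1 ∧
                sg * x + 1 ≤ A * jap ξ ^ (-(2:ℝ))) ∧
              (ξ ≤ -1 → A⁻¹ * jap ξ ^ (-(2:ℝ)) ≤ -(sg * x) + 1 ∧
                -(sg * x) + 1 ≤ A * jap ξ ^ (-(2:ℝ)))) ∧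
          -- derivatives of dφ :
          (∀ k : ℕ, ∃ C : ℝ, 0 < C ∧ ∀ x ∈ Set.Ioo (-1:ℝ) 1,
            |deriv^[k] dphi x| ≤ C * jap (dphi x) ^ (1 + 2*(k:ℝ))) := by
  refine ⟨1/100, by norm_num, fun γ hγ _ hsupp sg hs => ⟨fun α β => ?_, ?_, ?_, dphi_bd⟩⟩
  · obtain ⟨C1, hC1, h1⟩ := ((base_e hγ hsupp hs).iter hs α β).bound hs
    obtain ⟨C2, hC2, h2⟩ := ((base_et hγ hsupp hs).iter hs α β).bound hs
    refine ⟨max C1 C2, lt_max_of_lt_left hC1, fun x hx ξ => ⟨?_, ?_⟩⟩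
    · exact (h1 x hx ξ).trans (mul_le_mul_of_nonneg_right (le_max_left _ _)
        (Real.rpow_nonneg (jap_pos ξ).le _))
    · exact (h2 x hx ξ).trans (mul_le_mul_of_nonneg_right (le_max_right _ _)
        (Real.rpow_nonneg (jap_pos ξ).le _))
  · exact ⟨1/2, by norm_num, fun x hx ξ h => dphi_size hs hx ξ (W_small hsupp h)⟩
  · refine ⟨4, by norm_num, fun x hx ξ h => ⟨fun h1 => ?_, fun h1 => ?_⟩⟩
    · have := x_size hs (x := x) ξ (W_small hsupp h) 1 (Or.inl rfl) (by linarith)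
      simpa only [one_mul] using this
    · have := x_size hs (x := x) ξ (W_small hsupp h) (-1) (Or.inr rfl) (by linarith)
      simpa only [neg_mul, one_mul] using this

end
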